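/- Let Λ = (Λ_i)_{i∈ℤ} be a g-frame for H with respect to K represented by an invertible bounded operator T : H → H with bounded inverse. Then the kernel of the synthesis operator is invariant under both the right-shift and the left-shift: for every family (g_i)_{i∈ℤ} in K with Σ_{i∈ℤ} ‖g_i‖² < ∞, if Σ_{i∈ℤ} Λ_i*(g_i) = 0 then Σ_{i∈ℤ} Λ_{i+1}*(g_i) = 0 and Σ_{i∈ℤ} Λ_{i−1}*(g_i) = 0. -/

import Mathlib

/-!
Composing each `Λ i` with a bounded operator `S` applies the single bounded operator `S†` to the
synthesis series, so it preserves the vanishing of its sum. The right shift is the case `S = T`, and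
the left shift the case `S = T⁻¹`, because `Λ (i - 1) = Λ i ∘ T⁻¹`. The upper frame bound makes the
synthesis series converge unconditionally, so that its `tsum` is a genuine sum.
-/

open ContinuousLinearMap

open scoped InnerProductSpace InnerProduct

section Synthesis

variable {𝕜 ι H : Type*} [RCLike 𝕜] [NormedAddCommGroup H] [InnerProductSpace 𝕜 H]
  [CompleteSpace H] {K : ι → Type*} [∀ i, NormedAddCommGroup (K i)]
  [∀ i, InnerProductSpace 𝕜 (K i)] [∀ i, CompleteSpace (K i)]

theorem norm_sum_adjoint_apply_sq_le_sum_mul_sum (Λ : ∀ i, H →L[𝕜] K i) (g : ∀ i, K i)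
    (s : Finset ι) :
    (‖∑ i ∈ s, ((Λ i)†) (g i)‖ ^ 2) ^ 2 ≤
      (∑ i ∈ s, ‖g i‖ ^ 2) * ∑ i ∈ s, ‖Λ i (∑ j ∈ s, ((Λ j)†) (g j))‖ ^ 2 := by
  set x := ∑ i ∈ s, ((Λ i)†) (g i) with hx
  have norm_sq_le : ‖x‖ ^ 2 ≤ ∑ i ∈ s, ‖g i‖ * ‖Λ i x‖ :=
    calc ‖x‖ ^ 2 = ‖⟪x, x⟫_𝕜‖ := by simp [inner_self_eq_norm_sq_to_K]
      _ = ‖∑ i ∈ s, ⟪g i, Λ i x⟫_𝕜‖ := by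
        conv_lhs => rw [hx, sum_inner, ← hx]
        simp only [adjoint_inner_left]
      _ ≤ ∑ i ∈ s, ‖g i‖ * ‖Λ i x‖ := norm_sum_le_of_le s fun i _ => norm_inner_le_norm _ _
  calc (‖x‖ ^ 2) ^ 2 ≤ (∑ i ∈ s, ‖g i‖ * ‖Λ i x‖) ^ 2 := by gcongr
    _ ≤ (∑ i ∈ s, ‖g i‖ ^ 2) * ∑ i ∈ s, ‖Λ i x‖ ^ 2 := Finset.sum_mul_sq_le_sq_mul_sq _ _ _

theorem norm_sum_adjoint_apply_sq_le {Λ : ∀ i, H →L[𝕜] K i} {B : ℝ} (hB : 0 ≤ B) {s : Finset ι}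
    (hΛ : ∀ f, ∑ i ∈ s, ‖Λ i f‖ ^ 2 ≤ B * ‖f‖ ^ 2) (g : ∀ i, K i) :
    ‖∑ i ∈ s, ((Λ i)†) (g i)‖ ^ 2 ≤ B * ∑ i ∈ s, ‖g i‖ ^ 2 := by
  set x := ∑ i ∈ s, ((Λ i)†) (g i)
  rcases (sq_nonneg ‖x‖).eq_or_lt with hx | hx
  · rw [← hx]
    positivity
  · refine le_of_mul_le_mul_right ?_ hx
    calc ‖x‖ ^ 2 * ‖x‖ ^ 2 = (‖x‖ ^ 2) ^ 2 := (sq _).symm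
      _ ≤ (∑ i ∈ s, ‖g i‖ ^ 2) * ∑ i ∈ s, ‖Λ i x‖ ^ 2 :=
        norm_sum_adjoint_apply_sq_le_sum_mul_sum Λ g s
      _ ≤ (∑ i ∈ s, ‖g i‖ ^ 2) * (B * ‖x‖ ^ 2) := by gcongr; exact hΛ x
      _ = B * (∑ i ∈ s, ‖g i‖ ^ 2) * ‖x‖ ^ 2 := by ring

theorem summable_adjoint_apply {Λ : ∀ i, H →L[𝕜] K i} {B : ℝ} (hB : 0 ≤ B)
    (hΛ : ∀ (s : Finset ι) (f : H), ∑ i ∈ s, ‖Λ i f‖ ^ 2 ≤ B * ‖f‖ ^ 2) {g : ∀ i, K i}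
    (hg : Summable fun i => ‖g i‖ ^ 2) : Summable fun i => ((Λ i)†) (g i) := by
  refine summable_iff_vanishing_norm.2 fun ε hε => ?_
  obtain ⟨s, hs⟩ := summable_iff_vanishing_norm.1 (hg.mul_left B) (ε ^ 2) (by positivity)
  refine ⟨s, fun t hts => lt_of_pow_lt_pow_left₀ 2 hε.le ?_⟩
  calc ‖∑ i ∈ t, ((Λ i)†) (g i)‖ ^ 2 ≤ B * ∑ i ∈ t, ‖g i‖ ^ 2 :=
        norm_sum_adjoint_apply_sq_le hB (hΛ t) g
    _ = ∑ i ∈ t, B * ‖g i‖ ^ 2 := Finset.mul_sum _ _ _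
    _ ≤ ‖∑ i ∈ t, B * ‖g i‖ ^ 2‖ := Real.le_norm_self _
    _ < ε ^ 2 := hs t hts

theorem hasSum_adjoint_comp_apply {H' : Type*} [NormedAddCommGroup H'] [InnerProductSpace 𝕜 H']
    [CompleteSpace H'] {Λ : ∀ i, H →L[𝕜] K i} {g : ∀ i, K i} {a : H}
    (h : HasSum (fun i => ((Λ i)†) (g i)) a) (S : H' →L[𝕜] H) :
    HasSum (fun i => ((Λ i ∘L S)†) (g i)) ((S†) a) := by
  simpa only [adjoint_comp, comp_apply] using (S†).hasSum h

end Synthesis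

theorem gframe_Z_representation_ker_shift_invariant_general
    {𝕜 H K : Type*} [RCLike 𝕜] [NormedAddCommGroup H] [InnerProductSpace 𝕜 H] [CompleteSpace H]
    [NormedAddCommGroup K] [InnerProductSpace 𝕜 K] [CompleteSpace K]
    {Λ : ℤ → (H →L[𝕜] K)} {T : H ≃L[𝕜] H} (hrep : ∀ i, Λ (i + 1) = Λ i ∘L T)
    {g : ℤ → K} (hg : HasSum (fun i => ((Λ i)†) (g i)) 0) :
    HasSum (fun i => ((Λ (i + 1))†) (g i)) 0 ∧ HasSum (fun i => ((Λ (i - 1))†) (g i)) 0 := by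
  have hrep_symm (i : ℤ) : Λ (i - 1) = Λ i ∘L T.symm := by
    ext f
    simpa using (DFunLike.congr_fun (hrep (i - 1)) (T.symm f)).symm
  constructor
  · simpa only [hrep, map_zero] using hasSum_adjoint_comp_apply hg (T : H →L[𝕜] H)
  · simpa only [hrep_symm, map_zero] using hasSum_adjoint_comp_apply hg (T.symm : H →L[𝕜] H)

/-- If a g-frame `Λ = (Λ_i)_{i∈ℤ}` is represented by `T ∈ GL(H)`, then the kernel
of the synthesis operator is invariant under both the right shift and the left shift. -/
theorem gframe_Z_representation_ker_shift_invariant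
    {H K : Type*} [NormedAddCommGroup H] [InnerProductSpace ℂ H] [CompleteSpace H]
    [TopologicalSpace.SeparableSpace H]
    [NormedAddCommGroup K] [InnerProductSpace ℂ K] [CompleteSpace K]
    [TopologicalSpace.SeparableSpace K]
    (Λ : ℤ → (H →L[ℂ] K)) (A B : ℝ) (hA : 0 < A) (hAB : A ≤ B)
    (hsum : ∀ f : H, Summable fun i : ℤ => ‖Λ i f‖ ^ 2)
    (hlow : ∀ f : H, A * ‖f‖ ^ 2 ≤ ∑' i : ℤ, ‖Λ i f‖ ^ 2)
    (hup : ∀ f : H, ∑' i : ℤ, ‖Λ i f‖ ^ 2 ≤ B * ‖f‖ ^ 2)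
    (T : H ≃L[ℂ] H) (hrep : ∀ i : ℤ, Λ (i + 1) = (Λ i).comp (T : H →L[ℂ] H)) :
    ∀ g : ℤ → K, Summable (fun i : ℤ => ‖g i‖ ^ 2) →
      (∑' i : ℤ, ContinuousLinearMap.adjoint (Λ i) (g i)) = 0 →
      (∑' i : ℤ, ContinuousLinearMap.adjoint (Λ (i + 1)) (g i)) = 0 ∧
      (∑' i : ℤ, ContinuousLinearMap.adjoint (Λ (i - 1)) (g i)) = 0 := by
  intro g hg hg_ker
  have bessel (s : Finset ℤ) (f : H) : ∑ i ∈ s, ‖Λ i f‖ ^ 2 ≤ B * ‖f‖ ^ 2 :=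
    ((hsum f).sum_le_tsum s fun _ _ => sq_nonneg _).trans (hup f)
  have synthesis : HasSum (fun i => ((Λ i)†) (g i)) 0 :=
    (summable_adjoint_apply (hA.le.trans hAB) bessel hg).hasSum_iff.2 hg_ker
  obtain ⟨right_shift, left_shift⟩ :=
    gframe_Z_representation_ker_shift_invariant_general hrep synthesis
  exact ⟨right_shift.tsum_eq, left_shift.tsum_eq⟩
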